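/- arXiv:2001.11707 — 2 statements merged into one kernel-verified Lean document; each statement's English description precedes it below -/
import Mathlib

section
/- For all simplicial complexes 𝒦₁, 𝒦₂ over S, one has d(𝒦₁, 𝒦₂) = sup over n ≥ 0 of d(πₙ(𝒦₁), πₙ(𝒦₂)). -/
open scoped BigOperators

/-- A simplicial complex over the vertex set `S`: a nonempty collection of
nonempty finite subsets of `S`, closed under taking nonempty subsets. -/
def IsSimplicialComplex {S : Type*} (K : Set (Finset S)) : Prop :=
  K.Nonempty ∧ (∀ F ∈ K, F.Nonempty) ∧
    ∀ F ∈ K, ∀ G : Finset S, G.Nonempty → G ⊆ F → G ∈ K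

/-- Halved ℓ¹ distance between finitely supported real functions:
`d(α,β) = (1/2) ∑ₛ |α s - β s|`. -/
noncomputable def l1dist {S : Type*} (α β : S →₀ ℝ) : ℝ :=
  (1 / 2) * (α - β).sum fun _ x => |x|

/-- The ℓ¹ geometric realization of a collection `K` of finite subsets of `S`:
finitely supported probability vectors whose support is a face of `K`. -/
def realization {S : Type*} (K : Set (Finset S)) : Set (S →₀ ℝ) :=
  {α | (∀ s, 0 ≤ α s) ∧ (α.sum fun _ x => x) = 1 ∧ α.support ∈ K}

/-- Distance from a point to a set of finitely supported functions. -/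
noncomputable def distToSet {S : Type*} (α : S →₀ ℝ) (X : Set (S →₀ ℝ)) : ℝ :=
  sInf (l1dist α '' X)

/-- One-sided Hausdorff distance between (the realizations of) two complexes. -/
noncomputable def hdelta {S : Type*} (K₁ K₂ : Set (Finset S)) : ℝ :=
  sSup ((fun α => distToSet α (realization K₂)) '' realization K₁)

/-- Hausdorff distance between (the realizations of) two simplicial complexes. -/
noncomputable def hdist {S : Type*} (K₁ K₂ : Set (Finset S)) : ℝ :=
  max (hdelta K₁ K₂) (hdelta K₂ K₁)

/-- `d(F, K)`: supremum of distances to `|K|₁` over probability vectors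
supported exactly on `F`. -/
noncomputable def dFace {S : Type*} (F : Finset S) (K : Set (Finset S)) : ℝ :=
  sSup ((fun α => distToSet α (realization K)) ''
    {α : S →₀ ℝ | (∀ s, 0 ≤ α s) ∧ (α.sum fun _ x => x) = 1 ∧ α.support = F})

/-- The `n`-skeleton of a simplicial complex. -/
def skeleton {S : Type*} (n : ℕ) (K : Set (Finset S)) : Set (Finset S) :=
  {F | F ∈ K ∧ F.card ≤ n + 1}

open Classical in
lemma aux_l1dist_eq {S : Type*} (α β : S →₀ ℝ) (T : Finset S) (ha : α.support ⊆ T)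
    (hb : β.support ⊆ T) : l1dist α β = (1 / 2) * ∑ s ∈ T, |α s - β s| := by
  unfold l1dist
  rw [Finsupp.sum_of_support_subset (s := T)]
  · simp
  · intro s hs
    by_contra h
    have h1 : α s = 0 := by
      by_contra h'
      exact h (ha (Finsupp.mem_support_iff.2 h'))
    have h2 : β s = 0 := by
      by_contra h'
      exact h (hb (Finsupp.mem_support_iff.2 h'))
    simp [h1, h2] at hs
  · simp

lemma aux_sum_eq {S : Type*} (α : S →₀ ℝ) (T : Finset S) (ha : α.support ⊆ T) :
    (α.sum fun _ x => x) = ∑ s ∈ T, α s :=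
  Finsupp.sum_of_support_subset _ ha _ (by simp)

lemma aux_nonneg {S : Type*} (α β : S →₀ ℝ) : 0 ≤ l1dist α β := by
  unfold l1dist Finsupp.sum
  positivity

open Classical in
lemma aux_le_one {S : Type*} {K L : Set (Finset S)} {α β : S →₀ ℝ}
    (ha : α ∈ realization K) (hb : β ∈ realization L) : l1dist α β ≤ 1 := by
  have hA : α.support ⊆ α.support ∪ β.support := Finset.subset_union_left
  have hB : β.support ⊆ α.support ∪ β.support := Finset.subset_union_right
  rw [aux_l1dist_eq α β _ hA hB]
  have e1 := ha.2.1
  have e2 := hb.2.1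
  rw [aux_sum_eq α _ hA] at e1
  rw [aux_sum_eq β _ hB] at e2
  have : ∑ s ∈ α.support ∪ β.support, |α s - β s|
      ≤ ∑ s ∈ α.support ∪ β.support, (α s + β s) := by
    apply Finset.sum_le_sum
    intro s _
    have := ha.1 s
    have := hb.1 s
    rw [abs_le]; constructor <;> linarith
  rw [Finset.sum_add_distrib, e1, e2] at this
  linarith

open Classical in
lemma aux_retract {S : Type*} {K L : Set (Finset S)} (hK : ∀ F ∈ K, F.Nonempty)
    (h2 : IsSimplicialComplex L) (n : ℕ)
    {α β : S →₀ ℝ} (ha : α ∈ realization (skeleton n K)) (hb : β ∈ realization L) :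
    ∃ γ ∈ realization (skeleton n L), l1dist α γ ≤ l1dist α β := by
  obtain ⟨ha0, ha1, haK, hac⟩ := ha
  obtain ⟨hb0, hb1, hbL⟩ := hb
  have hFne := hK _ haK
  have hGne := h2.2.1 _ hbL
  obtain ⟨s0, hs0G, hcard⟩ : ∃ s0 ∈ β.support,
      (insert s0 (α.support ∩ β.support)).card ≤ α.support.card := by
    by_cases h : (α.support ∩ β.support).Nonempty
    · obtain ⟨s, hs⟩ := h
      refine ⟨s, (Finset.mem_inter.1 hs).2, ?_⟩
      rw [Finset.insert_eq_of_mem hs]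
      exact Finset.card_le_card Finset.inter_subset_left
    · obtain ⟨s, hs⟩ := hGne
      refine ⟨s, hs, ?_⟩
      rw [Finset.not_nonempty_iff_eq_empty.1 h]
      simpa using hFne
  set T := α.support ∪ β.support with hT
  have hA : α.support ⊆ T := Finset.subset_union_left
  have hB : β.support ⊆ T := Finset.subset_union_right
  rw [aux_sum_eq α T hA] at ha1
  rw [aux_sum_eq β T hB] at hb1
  set m : ℝ := ∑ s ∈ T, (if s ∈ β.support then 0 else α s) with hm
  have hm0 : 0 ≤ m := by
    apply Finset.sum_nonneg
    intro s _
    split_ifs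
    · exact le_rfl
    · exact ha0 s
  let γ : S →₀ ℝ := α.filter (· ∈ β.support) + Finsupp.single s0 m
  have hγ : ∀ s, γ s = (if s ∈ β.support then α s else 0) + (if s = s0 then m else 0) := by
    intro s
    simp only [γ, Finsupp.add_apply, Finsupp.filter_apply, Finsupp.single_apply, eq_comm]
  have hγs : γ.support ⊆ insert s0 (α.support ∩ β.support) := by
    intro s hs
    rw [Finsupp.mem_support_iff, hγ] at hs
    rw [Finset.mem_insert, Finset.mem_inter]
    by_contra hcon
    push Not at hcon
    apply hs
    rw [if_neg hcon.1]
    split_ifs with hsb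
    · by_contra h
      exact hcon.2 (Finsupp.mem_support_iff.2 (by simpa using h)) hsb
    · simp
  have hγG : γ.support ⊆ β.support := hγs.trans
    (Finset.insert_subset hs0G Finset.inter_subset_right)
  have hsingle : ∑ s ∈ T, (if s = s0 then m else 0) = m := by
    rw [Finset.sum_ite_eq' T s0, if_pos (hB hs0G)]
  have hγ1 : ∑ s ∈ T, γ s = 1 := by
    simp only [hγ]
    rw [Finset.sum_add_distrib, hsingle, hm, ← Finset.sum_add_distrib, ← ha1]
    apply Finset.sum_congr rfl
    intro s _
    split_ifs <;> simp
  have hγne : γ.support.Nonempty := by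
    by_contra h
    have : γ = 0 := by simpa using h
    rw [this] at hγ1
    simp at hγ1
  refine ⟨γ, ⟨?_, ?_, h2.2.2 _ hbL _ hγne hγG, ?_⟩, ?_⟩
  · intro s
    rw [hγ]
    have := ha0 s
    split_ifs <;> linarith
  · rw [aux_sum_eq γ T (hγG.trans hB), hγ1]
  · exact (Finset.card_le_card hγs).trans (hcard.trans hac)
  · rw [aux_l1dist_eq α γ T hA (hγG.trans hB), aux_l1dist_eq α β T hA hB]
    have u1 : ∑ s ∈ T, |α s - γ s| ≤ ∑ s ∈ T, ((if s ∈ β.support then 0 else α s) +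
        (if s = s0 then m else 0)) := by
      apply Finset.sum_le_sum
      intro s _
      rw [hγ]
      have := ha0 s
      rw [abs_le]
      constructor <;> split_ifs <;> linarith
    rw [Finset.sum_add_distrib, hsingle, ← hm] at u1
    have u2 : ∑ s ∈ T, (2 * (if s ∈ β.support then 0 else α s) - (α s - β s))
        ≤ ∑ s ∈ T, |α s - β s| := by
      apply Finset.sum_le_sum
      intro s _
      split_ifs with h
      · have := neg_abs_le (α s - β s)
        linarith
      · have : β s = 0 := by simpa using h
        rw [this]
        have := le_abs_self (α s - 0)
        linarith
    rw [Finset.sum_sub_distrib, Finset.sum_sub_distrib, ← Finset.mul_sum, ← hm, ha1, hb1] at u2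
    linarith

lemma aux_skeleton_nonempty {S : Type*} {K : Set (Finset S)} (h : IsSimplicialComplex K)
    (n : ℕ) : (realization (skeleton n K)).Nonempty := by
  obtain ⟨F, hF⟩ := h.1
  obtain ⟨s, hs⟩ := h.2.1 F hF
  have e : (Finsupp.single s (1 : ℝ)).support = {s} :=
    Finsupp.support_single _ one_ne_zero
  refine ⟨Finsupp.single s 1, ?_, by simp, ?_⟩
  · intro t
    exact (Finsupp.single_nonneg.2 zero_le_one : 0 ≤ Finsupp.single s (1 : ℝ)) t
  · rw [e]
    exact ⟨h.2.2 F hF _ (by simp) (by simpa using hs), by simp⟩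

lemma aux_skeleton_subset {S : Type*} (K : Set (Finset S)) (n : ℕ) :
    realization (skeleton n K) ⊆ realization K :=
  fun _ h => ⟨h.1, h.2.1, h.2.2.1⟩

lemma aux_bddBelow {S : Type*} (α : S →₀ ℝ) (X : Set (S →₀ ℝ)) :
    BddBelow (l1dist α '' X) := by
  refine ⟨0, ?_⟩
  rintro _ ⟨β, _, rfl⟩
  exact aux_nonneg α β

lemma aux_dist_skeleton {S : Type*} {K L : Set (Finset S)} (h1 : IsSimplicialComplex K)
    (h2 : IsSimplicialComplex L) (n : ℕ) {α : S →₀ ℝ} (ha : α ∈ realization (skeleton n K)) :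
    distToSet α (realization (skeleton n L)) = distToSet α (realization L) := by
  apply le_antisymm
  · apply le_csInf (((aux_skeleton_nonempty h2 0).mono (aux_skeleton_subset L 0)).image _)
    rintro _ ⟨β, hb, rfl⟩
    obtain ⟨γ, hγ, hle⟩ := aux_retract h1.2.1 h2 n ha hb
    exact (csInf_le (aux_bddBelow _ _) ⟨γ, hγ, rfl⟩).trans hle
  · exact csInf_le_csInf (aux_bddBelow _ _) ((aux_skeleton_nonempty h2 n).image _)
      (Set.image_mono (aux_skeleton_subset L n))

lemma aux_bddAbove {S : Type*} (K L : Set (Finset S)) (h : (realization L).Nonempty) :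
    BddAbove ((fun α => distToSet α (realization L)) '' realization K) := by
  refine ⟨1, ?_⟩
  rintro _ ⟨α, ha, rfl⟩
  obtain ⟨β, hb⟩ := h
  exact (csInf_le (aux_bddBelow _ _) ⟨β, hb, rfl⟩).trans (aux_le_one ha hb)

lemma aux_hdelta_skeleton_le {S : Type*} {K L : Set (Finset S)} (h1 : IsSimplicialComplex K)
    (h2 : IsSimplicialComplex L) (n : ℕ) :
    hdelta (skeleton n K) (skeleton n L) ≤ hdelta K L := by
  apply csSup_le ((aux_skeleton_nonempty h1 n).image _)
  rintro _ ⟨α, ha, rfl⟩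
  simp only
  rw [aux_dist_skeleton h1 h2 n ha]
  exact le_csSup (aux_bddAbove K L ((aux_skeleton_nonempty h2 n).mono (aux_skeleton_subset L n)))
    ⟨α, aux_skeleton_subset K n ha, rfl⟩

lemma aux_hdelta_le {S : Type*} {K L : Set (Finset S)} (h1 : IsSimplicialComplex K)
    (h2 : IsSimplicialComplex L) (c : ℝ)
    (hc : ∀ n, hdelta (skeleton n K) (skeleton n L) ≤ c) : hdelta K L ≤ c := by
  apply csSup_le (((aux_skeleton_nonempty h1 0).mono (aux_skeleton_subset K 0)).image _)
  rintro _ ⟨α, ha, rfl⟩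
  have ha' : α ∈ realization (skeleton α.support.card K) :=
    ⟨ha.1, ha.2.1, ha.2.2, Nat.le_succ _⟩
  refine le_trans ?_ (hc α.support.card)
  simp only
  rw [← aux_dist_skeleton h1 h2 _ ha']
  exact le_csSup (aux_bddAbove _ _ (aux_skeleton_nonempty h2 _)) ⟨α, ha', rfl⟩

/-- The Hausdorff distance between two simplicial complexes is the supremum
over `n` of the distances between their `n`-skeletons. -/
theorem stmt5 {S : Type*} (K₁ K₂ : Set (Finset S))
    (h1 : IsSimplicialComplex K₁) (h2 : IsSimplicialComplex K₂) :
    hdist K₁ K₂ = ⨆ n : ℕ, hdist (skeleton n K₁) (skeleton n K₂) := by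
  have hle : ∀ n, hdist (skeleton n K₁) (skeleton n K₂) ≤ hdist K₁ K₂ := fun n =>
    max_le_max (aux_hdelta_skeleton_le h1 h2 n) (aux_hdelta_skeleton_le h2 h1 n)
  have hbdd : BddAbove (Set.range fun n : ℕ => hdist (skeleton n K₁) (skeleton n K₂)) :=
    ⟨_, by rintro _ ⟨n, rfl⟩; exact hle n⟩
  apply le_antisymm
  · apply max_le
    · exact aux_hdelta_le h1 h2 _ fun n => (le_max_left _ _).trans (le_ciSup hbdd n)
    · exact aux_hdelta_le h2 h1 _ fun n => (le_max_right _ _).trans (le_ciSup hbdd n)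
  · exact ciSup_le hle
end

section
/- Let X be a finite subset of S with |X| = q ≥ 1 and let 1 ≤ k ≤ q. Let 𝒫*(X) denote the simplicial complex of all nonempty subsets of X, and 𝒫*_{≤k}(X) the simplicial complex of all nonempty subsets of X of cardinality at most k. Then d(𝒫*(X), 𝒫*_{≤k}(X)) = 1 − k/q. Moreover, if X is an infinite subset of S (with 𝒫*(X) replaced by the complex of all nonempty finite subsets of X), then d(𝒫*_f(X), 𝒫*_{≤k}(X)) = 1. -/
open scoped BigOperators

section helpers
variable {S : Type*}

/-- The halved distance as a sum over any finite set containing both supports. -/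
lemma l1dist_eq (α β : S →₀ ℝ) (U : Finset S) (ha : α.support ⊆ U) (hb : β.support ⊆ U) :
    l1dist α β = (1 / 2) * ∑ s ∈ U, |α s - β s| := by
  classical
  unfold l1dist
  rw [Finsupp.sum_of_support_subset (s := U)]
  · simp
  · exact (Finsupp.support_sub).trans (Finset.union_subset ha hb)
  · simp

lemma l1dist_nonneg' (α β : S →₀ ℝ) : 0 ≤ l1dist α β := by
  unfold l1dist Finsupp.sum
  positivity

lemma l1dist_self' (α : S →₀ ℝ) : l1dist α α = 0 := by
  simp [l1dist]

lemma distToSet_le {α β : S →₀ ℝ} {Y : Set (S →₀ ℝ)} (h : β ∈ Y) :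
    distToSet α Y ≤ l1dist α β := by
  refine csInf_le ⟨0, ?_⟩ ⟨β, h, rfl⟩
  rintro _ ⟨γ, _, rfl⟩
  exact l1dist_nonneg' _ _

lemma sum_eq_of_subset (α : S →₀ ℝ) (U : Finset S) (ha : α.support ⊆ U) :
    (α.sum fun _ x => x) = ∑ s ∈ U, α s :=
  Finsupp.sum_of_support_subset _ ha _ (by simp)

/-- Lower bound for the distance to a probability vector supported in `F`. -/
lemma l1dist_lower (α β : S →₀ ℝ) (h1 : (α.sum fun _ x => x) = 1)
    (h2 : (β.sum fun _ x => x) = 1) :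
    1 - ∑ s ∈ β.support, α s ≤ l1dist α β := by
  classical
  set U := α.support ∪ β.support with hU
  rw [l1dist_eq α β U Finset.subset_union_left Finset.subset_union_right]
  rw [sum_eq_of_subset α U Finset.subset_union_left] at h1
  have hF : β.support ⊆ U := Finset.subset_union_right
  have e1 := Finset.sum_sdiff (f := fun s => |α s - β s|) hF
  have e2 := Finset.sum_sdiff (f := fun s => α s) hF
  have i1 : ∑ s ∈ U \ β.support, α s ≤ ∑ s ∈ U \ β.support, |α s - β s| := by
    refine Finset.sum_le_sum fun s hs => ?_
    have : β s = 0 := by simpa using (Finset.mem_sdiff.1 hs).2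
    rw [this, sub_zero]; exact le_abs_self _
  have i2 : ∑ s ∈ β.support, (β s - α s) ≤ ∑ s ∈ β.support, |α s - β s| := by
    refine Finset.sum_le_sum fun s hs => ?_
    rw [abs_sub_comm]; exact le_abs_self _
  rw [Finset.sum_sub_distrib] at i2
  have h2' : ∑ s ∈ β.support, β s = 1 := h2
  linarith

/-- Pushing the mass outside `F` onto a point of `F`. -/
lemma exists_push (α : S →₀ ℝ) (h0 : ∀ s, 0 ≤ α s) (h1 : (α.sum fun _ x => x) = 1)
    (F : Finset S) (hF : F.Nonempty) :
    ∃ β : S →₀ ℝ, (∀ s, 0 ≤ β s) ∧ (β.sum fun _ x => x) = 1 ∧ β.support ⊆ F ∧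
      l1dist α β ≤ 1 - ∑ s ∈ F, α s := by
  classical
  obtain ⟨f, hf⟩ := hF
  set U := α.support ∪ F with hU
  have hFU : F ⊆ U := Finset.subset_union_right
  rw [sum_eq_of_subset α U Finset.subset_union_left] at h1
  have e2 := Finset.sum_sdiff (f := fun s => α s) hFU
  have hm : 0 ≤ 1 - ∑ s ∈ F, α s := by
    have : 0 ≤ ∑ s ∈ U \ F, α s := Finset.sum_nonneg fun s _ => h0 s
    linarith
  set m := 1 - ∑ s ∈ F, α s with hmdef
  set β : S →₀ ℝ := α.filter (· ∈ F) + Finsupp.single f m with hβ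
  have hβs : ∀ s, β s = (if s ∈ F then α s else 0) + (if s = f then m else 0) := by
    intro s
    simp [hβ, Finsupp.filter_apply, Finsupp.single_apply, eq_comm]
  have hsupp : β.support ⊆ F := by
    intro s hs
    by_contra hn
    rw [Finsupp.mem_support_iff, hβs] at hs
    have : s ≠ f := fun h => hn (h ▸ hf)
    simp [hn, this] at hs
  refine ⟨β, ?_, ?_, hsupp, ?_⟩
  · intro s
    rw [hβs]
    have := h0 s
    split_ifs <;> linarith
  · rw [sum_eq_of_subset β F hsupp]
    simp only [hβs, Finset.sum_add_distrib, Finset.sum_ite_eq', hf, if_true]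
    rw [Finset.sum_congr rfl (fun s hs => if_pos hs)]
    linarith
  · rw [l1dist_eq α β U Finset.subset_union_left (hsupp.trans hFU),
      ← Finset.sum_sdiff hFU]
    have a1 : ∑ s ∈ U \ F, |α s - β s| = ∑ s ∈ U \ F, α s := by
      refine Finset.sum_congr rfl fun s hs => ?_
      have hn := (Finset.mem_sdiff.1 hs).2
      have : s ≠ f := fun h => hn (h ▸ hf)
      rw [hβs]; simp [hn, this, abs_of_nonneg (h0 s)]
    have a2 : ∑ s ∈ F, |α s - β s| = ∑ s ∈ F, if s = f then m else 0 := by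
      refine Finset.sum_congr rfl fun s hs => ?_
      rw [hβs]
      by_cases h : s = f
      · simp [h, hf, abs_of_nonneg hm]
      · simp [h, hs]
    rw [a1, a2, Finset.sum_ite_eq', if_pos hf]
    linarith

/-- Averaging: some `k`-subset carries at least its share of the mass. -/
lemma exists_heavy (f : S → ℝ) (k : ℕ) (hk : 1 ≤ k) (d : ℕ) : ∀ X : Finset S, X.card = k + d →
    ∃ F ⊆ X, F.card = k ∧ (k : ℝ) * ∑ s ∈ X, f s ≤ (k + d : ℝ) * ∑ s ∈ F, f s := by
  classical
  induction d with
  | zero => intro X hX; exact ⟨X, subset_rfl, by simpa using hX, by simp⟩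
  | succ d ih =>
    intro X hX
    have hne : X.Nonempty := by rw [← Finset.card_pos]; omega
    obtain ⟨m, hmX, hm⟩ := Finset.exists_min_image X f hne
    obtain ⟨F, hF, hFc, hle⟩ := ih (X.erase m) (by rw [Finset.card_erase_of_mem hmX]; omega)
    refine ⟨F, hF.trans (Finset.erase_subset _ _), hFc, ?_⟩
    have hs := Finset.add_sum_erase X f hmX
    have hc := Finset.card_nsmul_le_sum (X.erase m) f (f m)
      (fun s hs => hm s (Finset.mem_of_mem_erase hs))
    rw [Finset.card_erase_of_mem hmX, hX, nsmul_eq_mul] at hc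
    have : k + (d + 1) - 1 = k + d := by omega
    rw [this] at hc
    push_cast at hc ⊢
    have hn : (0 : ℝ) < k + d := by positivity
    have hk0 : (0 : ℝ) ≤ k := by positivity
    refine le_of_mul_le_mul_left ?_ hn
    rw [← hs]
    have p1 := mul_le_mul_of_nonneg_left hc hk0
    have p2 := mul_le_mul_of_nonneg_left hle (by linarith : (0 : ℝ) ≤ k + d + 1)
    nlinarith

lemma hdelta_upper (X : Set S) (k : ℕ) (c : ℝ)
    (h : ∀ α ∈ realization {F : Finset S | F.Nonempty ∧ (F : Set S) ⊆ X},
      ∃ F : Finset S, F.Nonempty ∧ (F : Set S) ⊆ X ∧ F.card ≤ k ∧ 1 - c ≤ ∑ s ∈ F, α s) :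
    ∀ x ∈ ((fun α => distToSet α (realization
        {F : Finset S | F.Nonempty ∧ (F : Set S) ⊆ X ∧ F.card ≤ k})) ''
        realization {F : Finset S | F.Nonempty ∧ (F : Set S) ⊆ X}), x ≤ c := by
  rintro _ ⟨α, hα, rfl⟩
  obtain ⟨F, hne, hFX, hFk, hs⟩ := h α hα
  obtain ⟨β, b0, b1, bF, bd⟩ := exists_push α hα.1 hα.2.1 F hne
  suffices hmem : β ∈ realization {F : Finset S | F.Nonempty ∧ (F : Set S) ⊆ X ∧ F.card ≤ k} from
    (distToSet_le hmem).trans (bd.trans (by linarith))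
  refine ⟨b0, b1, ?_, ?_, ?_⟩
  · rw [Finset.nonempty_iff_ne_empty]
    intro h
    simp [Finsupp.sum, h] at b1
  · exact (Finset.coe_subset.2 bF).trans hFX
  · exact (Finset.card_le_card bF).trans hFk

lemma hdelta_lower (X : Set S) (k : ℕ) (hk : 1 ≤ k) (Y : Finset S) (hYX : (Y : Set S) ⊆ X)
    (hY : Y.Nonempty)
    (hb : BddAbove ((fun α => distToSet α (realization
        {F : Finset S | F.Nonempty ∧ (F : Set S) ⊆ X ∧ F.card ≤ k})) ''
        realization {F : Finset S | F.Nonempty ∧ (F : Set S) ⊆ X})) :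
    1 - (k : ℝ) / Y.card ≤ hdelta {F : Finset S | F.Nonempty ∧ (F : Set S) ⊆ X}
      {F : Finset S | F.Nonempty ∧ (F : Set S) ⊆ X ∧ F.card ≤ k} := by
  classical
  have hq : (0 : ℝ) < Y.card := by exact_mod_cast Finset.card_pos.2 hY
  set α : S →₀ ℝ := Finsupp.indicator Y (fun _ _ => (1 : ℝ) / Y.card) with hα
  have hαs : ∀ s, α s = if s ∈ Y then (1 : ℝ) / Y.card else 0 := by
    intro s; simp [hα, Finsupp.indicator_apply]
  have hsupp : α.support = Y := by
    ext s
    rw [Finsupp.mem_support_iff, hαs]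
    have := hq.ne'
    by_cases h : s ∈ Y <;> simp [h]
    rintro rfl; simp at h
  have h1 : (α.sum fun _ x => x) = 1 := by
    rw [sum_eq_of_subset α Y hsupp.subset, Finset.sum_congr rfl
      (fun s hs => (hαs s).trans (if_pos hs))]
    simp [hq.ne']
  have hmem : α ∈ realization {F : Finset S | F.Nonempty ∧ (F : Set S) ⊆ X} := by
    refine ⟨fun s => ?_, h1, ?_⟩
    · rw [hαs]; split_ifs <;> positivity
    · rw [hsupp]; exact ⟨hY, hYX⟩
  refine le_trans ?_ (le_csSup hb ⟨α, hmem, rfl⟩)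
  refine le_csInf ?_ ?_
  · obtain ⟨y, hy⟩ := hY
    refine Set.Nonempty.image _ ⟨Finsupp.single y 1, fun s => ?_, by simp, ?_⟩
    · rw [Finsupp.single_apply]; split_ifs <;> norm_num
    · rw [Finsupp.support_single_ne_zero _ one_ne_zero]
      exact ⟨by simp, by simpa using hYX hy, by simpa using hk⟩
  · rintro _ ⟨β, ⟨b0, b1, bne, bX, bk⟩, rfl⟩
    refine le_trans ?_ (l1dist_lower α β h1 b1)
    have : ∑ s ∈ β.support, α s ≤ β.support.card • ((1 : ℝ) / Y.card) := by
      refine Finset.sum_le_card_nsmul _ _ _ fun s _ => ?_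
      rw [hαs]; split_ifs
      · rfl
      · positivity
    have h3 : (β.support.card : ℝ) * (1 / Y.card) ≤ k * (1 / Y.card) := by
      gcongr
    rw [nsmul_eq_mul] at this
    rw [div_eq_mul_one_div]
    linarith

lemma hdelta_back (X : Set S) (k : ℕ) (c : ℝ) (hc : 0 ≤ c) :
    hdelta {F : Finset S | F.Nonempty ∧ (F : Set S) ⊆ X ∧ F.card ≤ k}
      {F : Finset S | F.Nonempty ∧ (F : Set S) ⊆ X} ≤ c := by
  refine Real.sSup_le ?_ hc
  rintro _ ⟨α, ⟨a0, a1, a2⟩, rfl⟩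
  have hmem : α ∈ realization {F : Finset S | F.Nonempty ∧ (F : Set S) ⊆ X} :=
    ⟨a0, a1, a2.1, a2.2.1⟩
  refine (distToSet_le hmem).trans ?_
  rw [l1dist_self']; exact hc

end helpers

/-- Distance between the full simplex on a vertex set `X` and its `k`-th
"uniform" subcomplex `𝒫*_{≤k}(X)`: it equals `1 - k/q` when `|X| = q` is finite,
and `1` when `X` is infinite. -/
theorem stmt11 {S : Type*} :
    (∀ (X : Finset S) (q k : ℕ), X.card = q → 1 ≤ q → 1 ≤ k → k ≤ q →
      hdist {F : Finset S | F.Nonempty ∧ F ⊆ X}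
        {F : Finset S | F.Nonempty ∧ F ⊆ X ∧ F.card ≤ k} = 1 - (k : ℝ) / q) ∧
    (∀ X : Set S, X.Infinite → ∀ k : ℕ, 1 ≤ k →
      hdist {F : Finset S | F.Nonempty ∧ (F : Set S) ⊆ X}
        {F : Finset S | F.Nonempty ∧ (F : Set S) ⊆ X ∧ F.card ≤ k} = 1) := by
  constructor
  · intro X q k hX hq hk hkq
    have hq0 : (0 : ℝ) < q := by exact_mod_cast hq
    have hc : (0 : ℝ) ≤ 1 - (k : ℝ) / q := by
      rw [sub_nonneg, div_le_one hq0]; exact_mod_cast hkq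
    have hu := hdelta_upper (X : Set S) k (1 - (k : ℝ) / q) (by
      rintro α ⟨a0, a1, a2⟩
      obtain ⟨F, hF, hFk, hle⟩ := exists_heavy α k hk (q - k) X (by omega)
      refine ⟨F, Finset.card_pos.1 (by omega), Finset.coe_subset.2 hF, hFk.le, ?_⟩
      rw [← sum_eq_of_subset α X (Finset.coe_subset.1 a2.2), a1, Nat.cast_sub hkq] at hle
      rw [sub_sub_cancel, div_le_iff₀ hq0]
      linarith)
    have hl := hdelta_lower (X : Set S) k hk X subset_rfl (Finset.card_pos.1 (by omega)) ⟨_, hu⟩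
    have hb := hdelta_back (X : Set S) k _ hc
    have hu' := Real.sSup_le hu hc
    rw [hX] at hl
    simp only [Finset.coe_subset] at hl hb hu'
    exact le_antisymm (max_le hu' hb) (hl.trans (le_max_left _ _))
  · intro X hX k hk
    have hu := hdelta_upper X k 1 (by
      rintro α ⟨a0, a1, a2⟩
      obtain ⟨x, hx⟩ := hX.nonempty
      refine ⟨{x}, by simp, by simpa using hx, by simpa using hk, ?_⟩
      simpa using a0 x)
    refine le_antisymm (max_le (Real.sSup_le hu zero_le_one) (hdelta_back X k 1 zero_le_one))
      (le_trans ?_ (le_max_left _ _))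
    refine le_of_forall_pos_sub_le fun ε hε => ?_
    obtain ⟨n, hn⟩ := exists_nat_gt ((k : ℝ) / ε)
    have hn0 : (0 : ℝ) < n := lt_of_le_of_lt (by positivity) hn
    obtain ⟨Y, hYX, hY⟩ := hX.exists_subset_card_eq n
    have hl := hdelta_lower X k hk Y hYX
      (Finset.card_pos.1 (by rw [hY]; exact_mod_cast hn0)) ⟨_, hu⟩
    rw [hY] at hl
    refine le_trans ?_ hl
    have : (k : ℝ) / n ≤ ε := by
      rw [div_lt_iff₀ hε] at hn
      rw [div_le_iff₀ hn0]
      linarith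
    linarith
end
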